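/- If a Banach space X has an FDD (E_i) satisfying subsequential T_{A,c}-upper estimates for some regular family A of finite subsets of ℕ and some 0 < c < 1, then (E_i) is shrinking. -/

import Mathlib

open Filter Topology

/-- A finite dimensional decomposition (FDD) of a Banach space `X`, given by its
sequence of coordinate projections. -/
structure FDDOn (X : Type*) [NormedAddCommGroup X] [NormedSpace ℝ X] where
  P : ℕ → X →L[ℝ] X
  finDim : ∀ n, FiniteDimensional ℝ (LinearMap.range (P n : X →ₗ[ℝ] X))
  idem : ∀ n x, P n (P n x) = P n x
  orth : ∀ m n, m ≠ n → ∀ x, P m (P n x) = 0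
  total : ∀ x : X, Tendsto (fun N => ∑ i ∈ Finset.range N, P i x) atTop (𝓝 x)

namespace FDDOn

variable {X : Type*} [NormedAddCommGroup X] [NormedSpace ℝ X]

/-- The interval projection onto `⊕_{a ≤ i < b} E_i`. -/
noncomputable def PI (F : FDDOn X) (a b : ℕ) : X →L[ℝ] X :=
  ∑ i ∈ Finset.Ico a b, F.P i

/-- Support of a vector with respect to the FDD. -/
def suppIn (F : FDDOn X) (x : X) : Set ℕ := {n | F.P n x ≠ 0}

/-- `x` is finitely supported with respect to the FDD, with support contained in
`[a, b]` and both endpoints active. -/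
def SuppExact (F : FDDOn X) (x : X) (a b : ℕ) : Prop :=
  a ≤ b ∧ (F.suppIn x ⊆ Set.Icc a b) ∧ a ∈ F.suppIn x ∧ b ∈ F.suppIn x

/-- `z` is a block sequence of the FDD. -/
def IsBlockSeq (F : FDDOn X) (z : ℕ → X) (a b : ℕ → ℕ) : Prop :=
  (∀ n, F.SuppExact (z n) (a n) (b n)) ∧ ∀ n, b n < a (n + 1)

/-- The FDD is shrinking: every normalized block sequence is weakly null. -/
def Shrinking (F : FDDOn X) : Prop :=
  ∀ (z : ℕ → X) (a b : ℕ → ℕ), F.IsBlockSeq z a b → (∀ n, ‖z n‖ = 1) →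
    ∀ f : X →L[ℝ] ℝ, Tendsto (fun n => f (z n)) atTop (𝓝 0)

end FDDOn

/-- A regular family of finite subsets of `ℕ`: contains all singletons, hereditary,
spreading, and compact (equivalently, containing no infinite strictly increasing
chain). -/
def IsRegularFamily (𝒜 : Set (Finset ℕ)) : Prop :=
  (∀ n : ℕ, ({n} : Finset ℕ) ∈ 𝒜) ∧
  (∀ s ∈ 𝒜, ∀ t : Finset ℕ, t ⊆ s → t ∈ 𝒜) ∧
  (∀ s ∈ 𝒜, ∀ g : ℕ → ℕ, (∀ a ∈ s, a ≤ g a) → StrictMonoOn g (s : Set ℕ) →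
    s.image g ∈ 𝒜) ∧
  ¬ ∃ f : ℕ → Finset ℕ, (∀ i, f i ∈ 𝒜) ∧ ∀ i, f i ⊂ f (i + 1)

/-- An `𝒜`-admissible finite sequence of successive finite sets
`A_0 < A_1 < ⋯ < A_{len-1}` with `(min A_i)_i ∈ 𝒜`. -/
structure AdmissibleSets (𝒜 : Set (Finset ℕ)) where
  len : ℕ
  A : ℕ → Finset ℕ
  nonemp : ∀ i < len, (A i).Nonempty
  ordered : ∀ i j : ℕ, i < j → j < len → ∀ a ∈ A i, ∀ b ∈ A j, a < b
  mins : ∃ m : ℕ → ℕ, (∀ i < len, m i ∈ A i ∧ ∀ a ∈ A i, m i ≤ a) ∧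
    (Finset.range len).image m ∈ 𝒜

/-- Iterates of the implicit Tsirelson norm on finitely supported sequences. -/
noncomputable def tsAux (𝒜 : Set (Finset ℕ)) (c : ℝ) : ℕ → (ℕ →₀ ℝ) → ℝ
  | 0 => fun x => ⨆ i, |x i|
  | (k + 1) => fun x =>
      max (⨆ i, |x i|)
        (⨆ p : AdmissibleSets 𝒜,
          c * ∑ i ∈ Finset.range p.len, tsAux 𝒜 c k (Finsupp.filter (· ∈ p.A i) x))

/-- The Tsirelson norm `‖·‖_{𝒜,c}` on `c₀₀`: the implicitly defined norm of the
Tsirelson space `T_{𝒜,c}`. -/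
noncomputable def tsirelsonNorm (𝒜 : Set (Finset ℕ)) (c : ℝ) (x : ℕ →₀ ℝ) : ℝ :=
  ⨆ k, tsAux 𝒜 c k x

/-- The FDD `F` satisfies subsequential `C`-`T_{𝒜,c}`-upper estimates: every normalized
block sequence `(z_n)` with minimal supports `(m_n)` is `C`-dominated by the unit
vectors `(t_{m_n})` of `T_{𝒜,c}`. -/
def SubseqTsirelsonUpperEst {X : Type*} [NormedAddCommGroup X] [NormedSpace ℝ X]
    (F : FDDOn X) (𝒜 : Set (Finset ℕ)) (c C : ℝ) : Prop :=
  ∀ (z : ℕ → X) (a b : ℕ → ℕ), F.IsBlockSeq z a b → (∀ n, ‖z n‖ = 1) →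
    ∀ (co : ℕ → ℝ) (N : ℕ),
      ‖∑ n ∈ Finset.range N, co n • z n‖ ≤
        C * tsirelsonNorm 𝒜 c (∑ n ∈ Finset.range N, Finsupp.single (a n) (co n))

/-!
If a functional `f` and a normalized block sequence `z` had `f (z n) ≥ δ > 0` for infinitely many
`n`, then by the upper estimates convex combinations of the corresponding unit vectors `t_{m_n}`
would be bounded away from `0`. So it suffices that the unit vectors `t_m`, `m ∈ M`, have convex
combinations of arbitrarily small Tsirelson norm for every infinite `M`.

Suppose that beyond every finite set there are such combinations of norm at most `t` with small
coordinates. An admissible sequence none of whose minima separates two points of the support of `x`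
cuts `x` into at most one piece, so its admissible sum at `x` is at most `c * t`. Every admissible
sequence splits few of the terms of a suitable average of successive vectors, because the sets of
minima lie in `𝒜`; that average exists by induction along the well-founded relation `⊃` on `𝒜`,
as in Pták's combinatorial lemma. Hence, for any fixed `q` in `(c, 1)`, norms at most `q * t` also
occur beyond every finite set, and iterating gives arbitrarily small norms.
-/

section Averaging

open Finset

variable {E α P : Type*} [AddCommGroup E] [Module ℝ E]

/-- A decreasing system of nonempty convex sets `𝒞 H`, indexed by finite sets `H` and thought of
as the vectors living beyond `H`. Every `φ p` is at most `t` on the system, and every `x ∈ 𝒞 H` is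
localized on a finite set `S` disjoint from `H`: already `φ p x ≤ s` unless `m p` meets `S`. -/
structure IsTailSystem (φ : P → E → ℝ) (m : P → Finset α) (s t : ℝ)
    (𝒞 : Finset α → Set E) : Prop where
  antitone : Antitone 𝒞
  convex : ∀ H, Convex ℝ (𝒞 H)
  nonempty : ∀ H, (𝒞 H).Nonempty
  le : ∀ H, ∀ x ∈ 𝒞 H, ∀ p, φ p x ≤ t
  localized : ∀ H, ∀ x ∈ 𝒞 H, ∃ S : Finset α, Disjoint S H ∧ ∀ p, Disjoint (m p) S → φ p x ≤ s

/-- Every tail of every tail system contains a vector on which all `φ p` with `p ∈ Q` are at most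
`r`. Quantifying over all tail systems makes the property stable under finite unions of `Q`. -/
def IsReducible (φ : P → E → ℝ) (m : P → Finset α) (s t : ℝ) (Q : Set P) (r : ℝ) : Prop :=
  ∀ 𝒞, IsTailSystem φ m s t 𝒞 → ∀ H, ∃ x ∈ 𝒞 H, ∀ p ∈ Q, φ p x ≤ r

variable {φ : P → E → ℝ} {m : P → Finset α} {s t r : ℝ}

lemma IsTailSystem.sublevel {𝒞 : Finset α → Set E} (h𝒞 : IsTailSystem φ m s t 𝒞)
    (hφ : ∀ p, ConvexOn ℝ Set.univ (φ p)) {Q : Set P}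
    (hQ : ∀ H, ∃ x ∈ 𝒞 H, ∀ p ∈ Q, φ p x ≤ r) :
    IsTailSystem φ m s t fun H => {x ∈ 𝒞 H | ∀ p ∈ Q, φ p x ≤ r} where
  antitone _ _ hH _ hx := ⟨h𝒞.antitone hH hx.1, hx.2⟩
  convex H _ hx _ hy _ _ ha hb hab :=
    ⟨h𝒞.convex H hx.1 hy.1 ha hb hab, fun p hp =>
      ((hφ p).convex_le r ⟨trivial, hx.2 p hp⟩ ⟨trivial, hy.2 p hp⟩ ha hb hab).2⟩
  nonempty := hQ
  le H x hx := h𝒞.le H x hx.1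
  localized H x hx := h𝒞.localized H x hx.1

lemma IsReducible.union (hφ : ∀ p, ConvexOn ℝ Set.univ (φ p)) {Q Q' : Set P}
    (hQ : IsReducible φ m s t Q r) (hQ' : IsReducible φ m s t Q' r) :
    IsReducible φ m s t (Q ∪ Q') r := by
  intro 𝒞 h𝒞 H
  obtain ⟨x, hx, hxQ'⟩ := hQ' _ (h𝒞.sublevel hφ (hQ 𝒞 h𝒞)) H
  exact ⟨x, hx.1, fun p hp => hp.elim (hx.2 p) (hxQ' p)⟩

lemma IsReducible.biUnion (hφ : ∀ p, ConvexOn ℝ Set.univ (φ p)) {ι : Type*} {Q : ι → Set P}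
    (S : Finset ι) (hQ : ∀ a ∈ S, IsReducible φ m s t (Q a) r) :
    IsReducible φ m s t (⋃ a ∈ S, Q a) r := by
  classical
  induction S using Finset.induction_on with
  | empty => exact fun 𝒞 h𝒞 H => (h𝒞.nonempty H).imp fun x hx => ⟨hx, by simp⟩
  | insert a S _ ih =>
    rw [set_biUnion_insert]
    exact (hQ a (mem_insert_self a S)).union hφ (ih fun b hb => hQ b (mem_insert_of_mem hb))

/-- `z` mixes `x` with a vector `y` that is good for every `p` whose `m p` meets the set `S` on
which `x` is localized. If `m p` misses `S`, then `x` itself is small at `p`. -/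
lemma IsTailSystem.exists_mix_le [DecidableEq α] {𝒞 : Finset α → Set E}
    (h𝒞 : IsTailSystem φ m s t 𝒞) (hφ : ∀ p, ConvexOn ℝ Set.univ (φ p)) {F : Finset α}
    (hF : ∀ a ∉ F, IsReducible φ m s t {p | insert a F ⊆ m p} r) {H : Finset α} (hFH : F ⊆ H)
    {x : E} (hx : x ∈ 𝒞 H) {u : ℝ} (hxu : ∀ p, F ⊆ m p → φ p x ≤ u) {a b : ℝ} (ha : 0 ≤ a)
    (hb : 0 ≤ b) (hab : a + b = 1) :
    ∃ z ∈ 𝒞 H, ∀ p, F ⊆ m p → φ p z ≤ max (a * s + b * t) (a * u + b * r) := by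
  obtain ⟨S, hSH, hS⟩ := h𝒞.localized H x hx
  obtain ⟨y, hy, hyS⟩ := IsReducible.biUnion hφ S
    (fun a ha => hF a fun haF => disjoint_left.1 hSH ha (hFH haF)) 𝒞 h𝒞 H
  refine ⟨a • x + b • y, h𝒞.convex H hx hy ha hb hab, fun p hp => ?_⟩
  have hconv : φ p (a • x + b • y) ≤ a * φ p x + b * φ p y :=
    (hφ p).2 trivial trivial ha hb hab
  by_cases hpS : Disjoint (m p) S
  · exact le_max_of_le_left (hconv.trans (by gcongr; exacts [hS p hpS, h𝒞.le H y hy p]))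
  · obtain ⟨i, hip, hiS⟩ := not_disjoint_iff.1 hpS
    have hyr : φ p y ≤ r := hyS p (Set.mem_biUnion hiS (insert_subset hip hp))
    exact le_max_of_le_right (hconv.trans (by gcongr; exact hxu p hp))

lemma isReducible_of_insert [DecidableEq α] (hφ : ∀ p, ConvexOn ℝ Set.univ (φ p)) {F : Finset α}
    (hF : ∀ r > s, ∀ a ∉ F, IsReducible φ m s t {p | insert a F ⊆ m p} r) (hr : s < r) :
    IsReducible φ m s t {p | F ⊆ m p} r := by
  intro 𝒞 h𝒞 H
  obtain ⟨r', hsr', hr'r⟩ := exists_between hr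
  have haverage : ∀ k : ℕ, ∃ x ∈ 𝒞 (F ∪ H), ∀ p, F ⊆ m p → φ p x ≤ r' + (t - s) / (k + 1) := by
    intro k
    induction k with
    | zero =>
      obtain ⟨x, hx⟩ := h𝒞.nonempty (F ∪ H)
      refine ⟨x, hx, fun p _ => (h𝒞.le _ x hx p).trans ?_⟩
      simp only [Nat.cast_zero, zero_add, div_one]
      linarith
    | succ k ih =>
      obtain ⟨x, hx, hxk⟩ := ih
      obtain ⟨z, hz, hzk⟩ := h𝒞.exists_mix_le hφ (hF r' hsr') subset_union_left hx hxk
        (a := (k + 1) / (k + 2)) (b := 1 / (k + 2)) (by positivity) (by positivity)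
        (by field_simp; ring)
      refine ⟨z, hz, fun p hp => (hzk p hp).trans (max_le ?_ (le_of_eq ?_))⟩
      · calc (k + 1) / (k + 2) * s + 1 / (k + 2) * t = s + (t - s) / (k + 2) := by
              field_simp; ring
          _ ≤ r' + (t - s) / ((k + 1 : ℕ) + 1) := by
              push_cast
              rw [add_assoc (k : ℝ), one_add_one_eq_two]
              gcongr
      · push_cast
        field_simp
        ring
  obtain ⟨k, hk⟩ := exists_nat_gt ((t - s) / (r - r'))
  obtain ⟨x, hx, hxk⟩ := haverage k
  refine ⟨x, h𝒞.antitone subset_union_right hx, fun p hp => (hxk p hp).trans ?_⟩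
  have hk' : (t - s) / (k + 1) ≤ r - r' := by
    rw [div_lt_iff₀ (by linarith)] at hk
    rw [div_le_iff₀ (by positivity)]
    linarith
  linarith

theorem isReducible_univ {𝒜 : Set (Finset α)} (h𝒜 : IsLowerSet 𝒜)
    (hwf : 𝒜.WellFoundedOn (· > ·)) (hφ : ∀ p, ConvexOn ℝ Set.univ (φ p)) (hm : ∀ p, m p ∈ 𝒜)
    (hr : s < r) : IsReducible φ m s t Set.univ r := by
  classical
  have hnotMem : ∀ F ∉ 𝒜, ∀ r, IsReducible φ m s t {p | F ⊆ m p} r := fun F hF r 𝒞 h𝒞 H =>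
    (h𝒞.nonempty H).imp fun x hx => ⟨hx, fun p hp => absurd (h𝒜 hp (hm p)) hF⟩
  have hmem : ∀ F ∈ 𝒜, ∀ r > s, IsReducible φ m s t {p | F ⊆ m p} r := by
    intro F hF
    refine hwf.induction (P := fun F => ∀ r > s, IsReducible φ m s t {p | F ⊆ m p} r) hF
      fun F _ ih _ hr => isReducible_of_insert hφ (fun r hr a ha => ?_) hr
    by_cases hins : insert a F ∈ 𝒜
    · exact ih _ hins (ssubset_insert ha) r hr
    · exact hnotMem _ hins r
  have hempty : IsReducible φ m s t {p | ∅ ⊆ m p} r := by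
    by_cases h : ∅ ∈ 𝒜
    · exact hmem ∅ h r hr
    · exact hnotMem ∅ h r
  simpa using hempty

end Averaging

section TsirelsonNorm

variable {𝒜 : Set (Finset ℕ)} {c : ℝ}

lemma AdmissibleSets.pairwiseDisjoint (p : AdmissibleSets 𝒜) :
    (Finset.range p.len : Set ℕ).PairwiseDisjoint p.A := by
  intro j hj j' hj' hne
  simp only [Finset.coe_range, Set.mem_Iio] at hj hj'
  refine Finset.disjoint_left.2 fun a ha ha' => ?_
  rcases lt_or_gt_of_ne hne with hlt | hlt
  · exact lt_irrefl a (p.ordered j j' hlt hj' a ha a ha')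
  · exact lt_irrefl a (p.ordered j' j hlt hj a ha' a ha)

lemma AdmissibleSets.sum_sum_abs_filter_le (p : AdmissibleSets 𝒜) (x : ℕ →₀ ℝ) :
    ∑ j ∈ Finset.range p.len, (x.filter (· ∈ p.A j)).sum (fun _ r => |r|) ≤
      x.sum fun _ r => |r| := by
  have hfilter : ∀ j, (x.filter (· ∈ p.A j)).sum (fun _ r => |r|) =
      ∑ i ∈ x.support with i ∈ p.A j, |x i| := fun j => by
    rw [Finsupp.sum, Finsupp.support_filter]
    exact Finset.sum_congr rfl fun i hi => by
      rw [Finsupp.filter_apply_pos _ _ (Finset.mem_filter.1 hi).2]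
  have hdisj : (Finset.range p.len : Set ℕ).PairwiseDisjoint
      fun j => x.support.filter (· ∈ p.A j) :=
    p.pairwiseDisjoint.mono fun j a ha => (Finset.mem_filter.1 ha).2
  simp only [hfilter]
  rw [← Finset.sum_biUnion hdisj]
  exact Finset.sum_le_sum_of_subset_of_nonneg
    (Finset.biUnion_subset.2 fun j _ => Finset.filter_subset _ _) fun _ _ _ => abs_nonneg _

lemma bddAbove_range_abs_apply (x : ℕ →₀ ℝ) : BddAbove (Set.range fun a => |x a|) :=
  (x.finite_range.image abs).bddAbove.mono (by rintro _ ⟨a, rfl⟩; exact ⟨x a, ⟨a, rfl⟩, rfl⟩)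

lemma abs_apply_le_tsAux (k : ℕ) (x : ℕ →₀ ℝ) (a : ℕ) : |x a| ≤ tsAux 𝒜 c k x := by
  have hsup : |x a| ≤ ⨆ i, |x i| := le_ciSup (bddAbove_range_abs_apply x) a
  cases k with
  | zero => exact hsup
  | succ k => exact hsup.trans (le_max_left _ _)

lemma tsAux_nonneg (k : ℕ) (x : ℕ →₀ ℝ) : 0 ≤ tsAux 𝒜 c k x :=
  (abs_nonneg _).trans (abs_apply_le_tsAux k x 0)

lemma tsAux_succ_le {k : ℕ} {x : ℕ →₀ ℝ} {B : ℝ} (habs : ∀ a, |x a| ≤ B)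
    (hadm : ∀ p : AdmissibleSets 𝒜,
      c * ∑ j ∈ Finset.range p.len, tsAux 𝒜 c k (x.filter (· ∈ p.A j)) ≤ B) :
    tsAux 𝒜 c (k + 1) x ≤ B :=
  max_le (ciSup_le habs) (Real.iSup_le hadm ((abs_nonneg _).trans (habs 0)))

/-- Minimality of the Tsirelson norm among the solutions of its defining inequalities, for
solutions `r` that need only be given on a family closed under restriction. -/
lemma tsAux_le_of_restrict {ι : Type*} (hc0 : 0 ≤ c) {x : ι → ℕ →₀ ℝ} {r : ι → ℝ}
    {res : ι → Finset ℕ → ι} (hres : ∀ i A, x (res i A) = (x i).filter (· ∈ A))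
    (habs : ∀ i a, |x i a| ≤ r i)
    (hadm : ∀ i (p : AdmissibleSets 𝒜),
      c * ∑ j ∈ Finset.range p.len, r (res i (p.A j)) ≤ r i) (k : ℕ) (i : ι) :
    tsAux 𝒜 c k (x i) ≤ r i := by
  induction k generalizing i with
  | zero => exact ciSup_le (habs i)
  | succ k ih =>
    refine tsAux_succ_le (habs i) fun p => le_trans ?_ (hadm i p)
    simp only [← hres]
    gcongr
    exact ih _

lemma tsAux_le_sum_abs (hc0 : 0 ≤ c) (hc1 : c ≤ 1) (k : ℕ) (x : ℕ →₀ ℝ) :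
    tsAux 𝒜 c k x ≤ x.sum fun _ r => |r| := by
  have hnonneg : ∀ y : ℕ →₀ ℝ, 0 ≤ y.sum fun _ r => |r| := fun y =>
    Finset.sum_nonneg fun _ _ => abs_nonneg _
  refine tsAux_le_of_restrict hc0 (x := id) (res := fun y A => y.filter (· ∈ A))
    (r := fun y => y.sum fun _ r => |r|) (fun _ _ => rfl) (fun y a => ?_) (fun y p => ?_) k x
  · by_cases ha : a ∈ y.support
    · exact Finset.single_le_sum (f := fun a => |y a|) (fun _ _ => abs_nonneg _) ha
    · simpa [Finsupp.notMem_support_iff.1 ha] using hnonneg y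
  · exact (mul_le_of_le_one_left (Finset.sum_nonneg fun _ _ => hnonneg _) hc1).trans
      (p.sum_sum_abs_filter_le y)

lemma mul_sum_tsAux_le_tsAux_succ (hc0 : 0 ≤ c) (hc1 : c ≤ 1) (k : ℕ) (x : ℕ →₀ ℝ)
    (p : AdmissibleSets 𝒜) :
    c * ∑ j ∈ Finset.range p.len, tsAux 𝒜 c k (x.filter (· ∈ p.A j)) ≤ tsAux 𝒜 c (k + 1) x := by
  have hbdd : BddAbove (Set.range fun p : AdmissibleSets 𝒜 =>
      c * ∑ j ∈ Finset.range p.len, tsAux 𝒜 c k (x.filter (· ∈ p.A j))) := by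
    refine ⟨x.sum fun _ r => |r|, ?_⟩
    rintro _ ⟨p, rfl⟩
    calc c * ∑ j ∈ Finset.range p.len, tsAux 𝒜 c k (x.filter (· ∈ p.A j))
        ≤ ∑ j ∈ Finset.range p.len, tsAux 𝒜 c k (x.filter (· ∈ p.A j)) :=
          mul_le_of_le_one_left (Finset.sum_nonneg fun _ _ => tsAux_nonneg _ _) hc1
      _ ≤ ∑ j ∈ Finset.range p.len, (x.filter (· ∈ p.A j)).sum fun _ r => |r| :=
          Finset.sum_le_sum fun j _ => tsAux_le_sum_abs hc0 hc1 k _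
      _ ≤ x.sum fun _ r => |r| := p.sum_sum_abs_filter_le x
  exact (le_ciSup hbdd p).trans (le_max_right _ _)

lemma tsAux_le_tsAux_succ (hc0 : 0 ≤ c) (hc1 : c ≤ 1) (k : ℕ) (x : ℕ →₀ ℝ) :
    tsAux 𝒜 c k x ≤ tsAux 𝒜 c (k + 1) x := by
  induction k generalizing x with
  | zero => exact le_max_left _ _
  | succ k ih =>
    refine tsAux_succ_le (abs_apply_le_tsAux _ x) fun p =>
      le_trans ?_ (mul_sum_tsAux_le_tsAux_succ hc0 hc1 (k + 1) x p)
    gcongr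
    exact ih _

lemma bddAbove_range_tsAux (hc0 : 0 ≤ c) (hc1 : c ≤ 1) (x : ℕ →₀ ℝ) :
    BddAbove (Set.range fun k => tsAux 𝒜 c k x) :=
  ⟨x.sum fun _ r => |r|, by rintro _ ⟨k, rfl⟩; exact tsAux_le_sum_abs hc0 hc1 k x⟩

lemma tsAux_le_tsirelsonNorm (hc0 : 0 ≤ c) (hc1 : c ≤ 1) (k : ℕ) (x : ℕ →₀ ℝ) :
    tsAux 𝒜 c k x ≤ tsirelsonNorm 𝒜 c x :=
  le_ciSup (bddAbove_range_tsAux hc0 hc1 x) k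

lemma tsirelsonNorm_nonneg (x : ℕ →₀ ℝ) : 0 ≤ tsirelsonNorm 𝒜 c x :=
  Real.iSup_nonneg fun k => tsAux_nonneg k x

lemma tsirelsonNorm_le_sum_abs (hc0 : 0 ≤ c) (hc1 : c ≤ 1) (x : ℕ →₀ ℝ) :
    tsirelsonNorm 𝒜 c x ≤ x.sum fun _ r => |r| :=
  ciSup_le fun k => tsAux_le_sum_abs hc0 hc1 k x

lemma tsirelsonNorm_zero (hc0 : 0 ≤ c) (hc1 : c ≤ 1) : tsirelsonNorm 𝒜 c 0 = 0 :=
  le_antisymm (by simpa using tsirelsonNorm_le_sum_abs (𝒜 := 𝒜) hc0 hc1 0)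
    (tsirelsonNorm_nonneg 0)

lemma abs_apply_le_tsirelsonNorm (hc0 : 0 ≤ c) (hc1 : c ≤ 1) (x : ℕ →₀ ℝ) (a : ℕ) :
    |x a| ≤ tsirelsonNorm 𝒜 c x :=
  (abs_apply_le_tsAux 0 x a).trans (tsAux_le_tsirelsonNorm hc0 hc1 0 x)

lemma mul_sum_tsirelsonNorm_le (hc0 : 0 ≤ c) (hc1 : c ≤ 1) (x : ℕ →₀ ℝ) (p : AdmissibleSets 𝒜) :
    c * ∑ j ∈ Finset.range p.len, tsirelsonNorm 𝒜 c (x.filter (· ∈ p.A j)) ≤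
      tsirelsonNorm 𝒜 c x := by
  have hlim : ∀ y : ℕ →₀ ℝ,
      Tendsto (fun k => tsAux 𝒜 c k y) atTop (𝓝 (tsirelsonNorm 𝒜 c y)) := fun y =>
    tendsto_atTop_ciSup (monotone_nat_of_le_succ fun k => tsAux_le_tsAux_succ hc0 hc1 k y)
      (bddAbove_range_tsAux hc0 hc1 y)
  exact le_of_tendsto' ((tendsto_finsetSum _ fun j _ => hlim _).const_mul c) fun k =>
    (mul_sum_tsAux_le_tsAux_succ hc0 hc1 k x p).trans (tsAux_le_tsirelsonNorm hc0 hc1 _ x)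

lemma tsirelsonNorm_le (hc0 : 0 ≤ c) (hc1 : c ≤ 1) {x : ℕ →₀ ℝ} {B : ℝ}
    (habs : ∀ a, |x a| ≤ B)
    (hadm : ∀ p : AdmissibleSets 𝒜,
      c * ∑ j ∈ Finset.range p.len, tsirelsonNorm 𝒜 c (x.filter (· ∈ p.A j)) ≤ B) :
    tsirelsonNorm 𝒜 c x ≤ B := by
  refine ciSup_le fun k => (tsAux_le_tsAux_succ hc0 hc1 k x).trans ?_
  refine tsAux_succ_le habs fun p => le_trans ?_ (hadm p)
  gcongr
  exact tsAux_le_tsirelsonNorm hc0 hc1 k _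

lemma tsirelsonNorm_filter_le (hc0 : 0 ≤ c) (hc1 : c ≤ 1) (x : ℕ →₀ ℝ) (q : ℕ → Prop)
    [DecidablePred q] : tsirelsonNorm 𝒜 c (x.filter q) ≤ tsirelsonNorm 𝒜 c x := by
  refine ciSup_le fun k => tsAux_le_of_restrict hc0 (x := fun y : ℕ →₀ ℝ => y.filter q)
    (res := fun y A => y.filter (· ∈ A)) (fun y A => ?_) (fun y a => ?_)
    (fun y p => mul_sum_tsirelsonNorm_le hc0 hc1 y p) k x
  · ext a
    simp only [Finsupp.filter_apply]
    split_ifs <;> rfl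
  · refine le_trans ?_ (abs_apply_le_tsirelsonNorm hc0 hc1 y a)
    rw [Finsupp.filter_apply]
    split_ifs <;> simp

lemma convexOn_tsirelsonNorm (hc0 : 0 ≤ c) (hc1 : c ≤ 1) :
    ConvexOn ℝ Set.univ (tsirelsonNorm 𝒜 c) := by
  refine ⟨convex_univ, fun x _ y _ α β hα hβ _ => ciSup_le fun k => ?_⟩
  refine tsAux_le_of_restrict hc0 (x := fun z : (ℕ →₀ ℝ) × (ℕ →₀ ℝ) => α • z.1 + β • z.2)
    (r := fun z => α • tsirelsonNorm 𝒜 c z.1 + β • tsirelsonNorm 𝒜 c z.2)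
    (res := fun z A => (z.1.filter (· ∈ A), z.2.filter (· ∈ A)))
    (fun z A => by rw [Finsupp.filter_add, Finsupp.filter_smul, Finsupp.filter_smul])
    (fun z a => ?_) (fun z p => ?_) k (x, y)
  · calc |α * z.1 a + β * z.2 a| ≤ α * |z.1 a| + β * |z.2 a| := by
          simpa only [abs_mul, abs_of_nonneg hα, abs_of_nonneg hβ] using
            abs_add_le (α * z.1 a) (β * z.2 a)
      _ ≤ α * tsirelsonNorm 𝒜 c z.1 + β * tsirelsonNorm 𝒜 c z.2 := by
          gcongr <;> exact abs_apply_le_tsirelsonNorm hc0 hc1 _ a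
  · simp only [smul_eq_mul, Finset.sum_add_distrib, ← Finset.mul_sum, mul_add,
      mul_left_comm c]
    gcongr <;> exact mul_sum_tsirelsonNorm_le hc0 hc1 _ p

lemma convexOn_mul_sum_tsirelsonNorm (hc0 : 0 ≤ c) (hc1 : c ≤ 1) (p : AdmissibleSets 𝒜) :
    ConvexOn ℝ Set.univ fun x : ℕ →₀ ℝ =>
      c * ∑ j ∈ Finset.range p.len, tsirelsonNorm 𝒜 c (x.filter (· ∈ p.A j)) := by
  refine ⟨convex_univ, fun x _ y _ α β hα hβ hαβ => ?_⟩
  simp only [smul_eq_mul, mul_left_comm _ c, ← mul_add, Finset.mul_sum (a := α),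
    Finset.mul_sum (a := β), ← Finset.sum_add_distrib, Finsupp.filter_add, Finsupp.filter_smul]
  gcongr
  exact (convexOn_tsirelsonNorm hc0 hc1).2 trivial trivial hα hβ hαβ

end TsirelsonNorm

section SmallAverages

variable {𝒜 : Set (Finset ℕ)} {c : ℝ}

/-- The set `{min A_0, min A_1, …}` of minima of an admissible sequence, which belongs to `𝒜`. -/
noncomputable def AdmissibleSets.minSet (p : AdmissibleSets 𝒜) : Finset ℕ :=
  (Finset.range p.len).image p.mins.choose

lemma AdmissibleSets.minSet_mem (p : AdmissibleSets 𝒜) : p.minSet ∈ 𝒜 :=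
  p.mins.choose_spec.2

lemma AdmissibleSets.exists_mem_minSet (p : AdmissibleSets 𝒜) {j j' a b : ℕ} (hjj' : j < j')
    (hj' : j' < p.len) (ha : a ∈ p.A j) (hb : b ∈ p.A j') : ∃ i ∈ p.minSet, a < i ∧ i ≤ b := by
  obtain ⟨hmem, hle⟩ := p.mins.choose_spec.1 j' hj'
  exact ⟨_, Finset.mem_image_of_mem _ (Finset.mem_range.2 hj'),
    p.ordered j j' hjj' hj' a ha _ hmem, hle b hb⟩

/-- At most one `A_j` meets the support of `x`: two of them would be separated by a minimum. -/
lemma AdmissibleSets.sum_tsirelsonNorm_filter_le (hc0 : 0 ≤ c) (hc1 : c ≤ 1)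
    (p : AdmissibleSets 𝒜) {x : ℕ →₀ ℝ}
    (hx : ∀ i ∈ p.minSet, ∀ a ∈ x.support, ∀ b ∈ x.support, a < i → b < i) :
    ∑ j ∈ Finset.range p.len, tsirelsonNorm 𝒜 c (x.filter (· ∈ p.A j)) ≤
      tsirelsonNorm 𝒜 c x := by
  have hunique : ∀ j < p.len, ∀ j' < p.len, x.filter (· ∈ p.A j) ≠ 0 →
      x.filter (· ∈ p.A j') ≠ 0 → ¬ j < j' := by
    intro j _ j' hj' hxj hxj' hlt
    obtain ⟨a, ha⟩ := Finsupp.support_nonempty_iff.2 hxj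
    obtain ⟨b, hb⟩ := Finsupp.support_nonempty_iff.2 hxj'
    rw [Finsupp.support_filter, Finset.mem_filter] at ha hb
    obtain ⟨i, hi, hai, hib⟩ := p.exists_mem_minSet hlt hj' ha.2 hb.2
    exact hib.not_gt (hx i hi a ha.1 b hb.1 hai)
  by_cases hex : ∃ j < p.len, x.filter (· ∈ p.A j) ≠ 0
  · obtain ⟨j, hj, hxj⟩ := hex
    rw [Finset.sum_eq_single_of_mem j (Finset.mem_range.2 hj)]
    · exact tsirelsonNorm_filter_le hc0 hc1 x _
    · intro j' hj' hne
      rw [Finset.mem_range] at hj'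
      by_contra h
      have hxj' : x.filter (· ∈ p.A j') ≠ 0 := fun h0 => h (h0 ▸ tsirelsonNorm_zero hc0 hc1)
      exact (lt_or_gt_of_ne hne).elim (hunique j' hj' j hj hxj' hxj) (hunique j hj j' hj' hxj hxj')
  · push Not at hex
    rw [Finset.sum_eq_zero fun j hj => by
      rw [hex j (Finset.mem_range.1 hj), tsirelsonNorm_zero hc0 hc1]]
    exact tsirelsonNorm_nonneg x

/-- The convex hull of the unit vectors `t_m`, `m ∈ M`, in `c₀₀`. -/
def unitVectorHull (M : Set ℕ) : Set (ℕ →₀ ℝ) :=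
  convexHull ℝ ((fun m => Finsupp.single m 1) '' M)

lemma unitVectorHull_mono {M M' : Set ℕ} (h : M ⊆ M') : unitVectorHull M ⊆ unitVectorHull M' :=
  convexHull_mono (Set.image_mono h)

lemma support_subset_of_mem_unitVectorHull {M : Set ℕ} {x : ℕ →₀ ℝ} (hx : x ∈ unitVectorHull M) :
    ↑x.support ⊆ M := by
  have hsub : unitVectorHull M ⊆ Finsupp.supported ℝ ℝ M := by
    refine convexHull_min ?_ (Finsupp.supported ℝ ℝ M).convex
    rintro _ ⟨m, hm, rfl⟩
    exact Finsupp.single_mem_supported ℝ 1 hm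
  exact (Finsupp.mem_supported ℝ x).1 (hsub hx)

lemma tsirelsonNorm_le_one_of_mem_unitVectorHull (hc0 : 0 ≤ c) (hc1 : c ≤ 1) {M : Set ℕ}
    {x : ℕ →₀ ℝ} (hx : x ∈ unitVectorHull M) : tsirelsonNorm 𝒜 c x ≤ 1 := by
  have hsub : unitVectorHull M ⊆ {y ∈ Set.univ | tsirelsonNorm 𝒜 c y ≤ 1} := by
    refine convexHull_min ?_ ((convexOn_tsirelsonNorm hc0 hc1).convex_le 1)
    rintro _ ⟨m, -, rfl⟩
    exact ⟨trivial, (tsirelsonNorm_le_sum_abs hc0 hc1 _).trans (by simp)⟩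
  exact (hsub hx).2

lemma abs_apply_le_one_of_mem_unitVectorHull {M : Set ℕ} {x : ℕ →₀ ℝ}
    (hx : x ∈ unitVectorHull M) (a : ℕ) : |x a| ≤ 1 :=
  (abs_apply_le_tsirelsonNorm (𝒜 := ∅) zero_le_one le_rfl x a).trans
    (tsirelsonNorm_le_one_of_mem_unitVectorHull zero_le_one le_rfl hx)

lemma convexOn_abs_apply (a : ℕ) : ConvexOn ℝ Set.univ fun x : ℕ →₀ ℝ => |x a| :=
  (convexOn_norm convex_univ).comp_linearMap (Finsupp.lapply a : (ℕ →₀ ℝ) →ₗ[ℝ] ℝ)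

lemma nonempty_unitVectorHull_tail {M : Set ℕ} (hM : M.Infinite) (H : Finset ℕ) :
    (unitVectorHull {m ∈ M | ∀ a ∈ H, a < m}).Nonempty := by
  obtain ⟨m, hm, hHm⟩ := hM.exists_gt (H.sup id)
  exact ⟨_, subset_convexHull ℝ _
    ⟨m, ⟨hm, fun a ha => (Finset.le_sup (f := id) ha).trans_lt hHm⟩, rfl⟩⟩

lemma antitone_unitVectorHull_tail (M : Set ℕ) :
    Antitone fun H : Finset ℕ => unitVectorHull {m ∈ M | ∀ a ∈ H, a < m} :=
  fun _ _ hH => unitVectorHull_mono fun _ hm => ⟨hm.1, fun a ha => hm.2 a (hH ha)⟩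

lemma wellFoundedOn_card_le (α : Type*) (n : ℕ) :
    {A : Finset α | A.card ≤ n}.WellFoundedOn (· > ·) := by
  refine Subrelation.wf (r := InvImage (· < ·) fun A => n - A.1.card) (fun {A B} hAB => ?_)
    (InvImage.wf _ wellFounded_lt)
  have hlt : B.1.card < A.1.card := Finset.card_lt_card hAB
  have hA : A.1.card ≤ n := A.2
  exact Nat.sub_lt_sub_left (hlt.trans_le hA) hlt

lemma exists_mem_unitVectorHull_abs_apply_le {M : Set ℕ} (hM : M.Infinite) {ε : ℝ} (hε : 0 < ε)
    (H : Finset ℕ) : ∃ x ∈ unitVectorHull {m ∈ M | ∀ a ∈ H, a < m}, ∀ a, |x a| ≤ ε := by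
  have htail : IsTailSystem (fun a (x : ℕ →₀ ℝ) => |x a|) (fun a => {a}) 0 1
      fun H : Finset ℕ => unitVectorHull {m ∈ M | ∀ a ∈ H, a < m} :=
    { antitone := antitone_unitVectorHull_tail M
      convex := fun _ => convex_convexHull ℝ _
      nonempty := nonempty_unitVectorHull_tail hM
      le := fun _ _ hx => abs_apply_le_one_of_mem_unitVectorHull hx
      localized := fun H x hx => by
        refine ⟨x.support, Finset.disjoint_left.2 fun a ha haH =>
          ((support_subset_of_mem_unitVectorHull hx ha).2 a haH).false, fun a ha => ?_⟩
        simpa using ha }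
  obtain ⟨x, hx, hxε⟩ := isReducible_univ (𝒜 := {A | A.card ≤ 1})
    (fun _ _ hBA hA => (Finset.card_le_card hBA).trans hA) (wellFoundedOn_card_le ℕ 1)
    convexOn_abs_apply (fun a => (Finset.card_singleton a).le) hε _ htail H
  exact ⟨x, hx, fun a => hxε a trivial⟩

lemma isTailSystem_tsirelson (hc0 : 0 ≤ c) (hc1 : c ≤ 1) {t : ℝ} {𝒞 : Finset ℕ → Set (ℕ →₀ ℝ)}
    (hanti : Antitone 𝒞) (hconv : ∀ H, Convex ℝ (𝒞 H)) (hne : ∀ H, (𝒞 H).Nonempty)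
    (hsupp : ∀ H, ∀ x ∈ 𝒞 H, ∀ a ∈ H, ∀ i ∈ x.support, a < i)
    (ht : ∀ H, ∀ x ∈ 𝒞 H, tsirelsonNorm 𝒜 c x ≤ t) :
    IsTailSystem (fun (p : AdmissibleSets 𝒜) x =>
      c * ∑ j ∈ Finset.range p.len, tsirelsonNorm 𝒜 c (x.filter (· ∈ p.A j)))
      AdmissibleSets.minSet (c * t) t 𝒞 where
  antitone := hanti
  convex := hconv
  nonempty := hne
  le H x hx p := (mul_sum_tsirelsonNorm_le hc0 hc1 x p).trans (ht H x hx)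
  localized H x hx := by
    refine ⟨x.support.biUnion fun a => x.support.biUnion (Finset.Ioc a),
      Finset.disjoint_left.2 fun i hi hiH => ?_, fun p hp => ?_⟩
    · simp only [Finset.mem_biUnion, Finset.mem_Ioc] at hi
      obtain ⟨a, ha, _, _, hai, _⟩ := hi
      exact hai.not_gt (hsupp H x hx i hiH a ha)
    · refine mul_le_mul_of_nonneg_left ((p.sum_tsirelsonNorm_filter_le hc0 hc1 ?_).trans
        (ht H x hx)) hc0
      intro i hi a ha b hb hai
      by_contra! hib
      exact Finset.disjoint_left.1 hp hi (Finset.mem_biUnion.2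
        ⟨a, ha, Finset.mem_biUnion.2 ⟨b, hb, Finset.mem_Ioc.2 ⟨hai, hib⟩⟩⟩)

lemma exists_mem_unitVectorHull_tsirelsonNorm_le (h𝒜 : IsLowerSet 𝒜)
    (hwf : 𝒜.WellFoundedOn (· > ·)) (hc0 : 0 ≤ c) {q : ℝ} (hcq : c < q) (hq1 : q ≤ 1) {M : Set ℕ}
    (hM : M.Infinite) {ε : ℝ} (hε : 0 < ε) (k : ℕ) (H : Finset ℕ) :
    ∃ x ∈ unitVectorHull {m ∈ M | ∀ a ∈ H, a < m},
      (∀ a, |x a| ≤ ε) ∧ tsirelsonNorm 𝒜 c x ≤ max ε (q ^ k) := by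
  have hc1 : c ≤ 1 := hcq.le.trans hq1
  induction k generalizing H with
  | zero =>
    obtain ⟨x, hx, hxε⟩ := exists_mem_unitVectorHull_abs_apply_le hM hε H
    refine ⟨x, hx, hxε, le_max_of_le_right ?_⟩
    simpa only [pow_zero] using tsirelsonNorm_le_one_of_mem_unitVectorHull hc0 hc1 hx
  | succ k ih =>
    set t := max ε (q ^ k)
    have ht : 0 < t := lt_max_of_lt_left hε
    have htail := isTailSystem_tsirelson hc0 hc1 (𝒜 := 𝒜) (t := t)
      (𝒞 := fun H => unitVectorHull {m ∈ M | ∀ a ∈ H, a < m} ∩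
        ((⋂ a, {x ∈ Set.univ | |x a| ≤ ε}) ∩ {x ∈ Set.univ | tsirelsonNorm 𝒜 c x ≤ t}))
      (fun _ _ hH => Set.inter_subset_inter_left _ (antitone_unitVectorHull_tail M hH))
      (fun H => (convex_convexHull ℝ _).inter
        ((convex_iInter fun a => (convexOn_abs_apply a).convex_le ε).inter
          ((convexOn_tsirelsonNorm hc0 hc1).convex_le t)))
      (fun H => (ih H).imp fun x hx => by simpa using hx)
      (fun H x hx a ha i hi => (support_subset_of_mem_unitVectorHull hx.1 hi).2 a ha)
      (fun H x hx => hx.2.2.2)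
    obtain ⟨x, ⟨hx, hxε, -⟩, hxq⟩ := isReducible_univ h𝒜 hwf
      (convexOn_mul_sum_tsirelsonNorm hc0 hc1) AdmissibleSets.minSet_mem
      (mul_lt_mul_of_pos_right hcq ht) _ htail H
    have habs : ∀ a, |x a| ≤ ε := fun a => (Set.mem_iInter.1 hxε a).2
    refine ⟨x, hx, habs, tsirelsonNorm_le hc0 hc1 (fun a => le_max_of_le_left (habs a))
      fun p => (hxq p trivial).trans ?_⟩
    rw [mul_max_of_nonneg _ _ (hc0.trans hcq.le), ← pow_succ']
    exact max_le_max_right _ (mul_le_of_le_one_left hε.le hq1)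

theorem exists_mem_unitVectorHull_tsirelsonNorm_lt (h𝒜 : IsLowerSet 𝒜)
    (hwf : 𝒜.WellFoundedOn (· > ·)) (hc0 : 0 ≤ c) (hc1 : c < 1) {M : Set ℕ} (hM : M.Infinite)
    {ε : ℝ} (hε : 0 < ε) : ∃ x ∈ unitVectorHull M, tsirelsonNorm 𝒜 c x < ε := by
  obtain ⟨q, hcq, hq1⟩ := exists_between hc1
  obtain ⟨k, hk⟩ := exists_pow_lt_of_lt_one hε hq1
  obtain ⟨x, hx, -, hxk⟩ :=
    exists_mem_unitVectorHull_tsirelsonNorm_le h𝒜 hwf hc0 hcq hq1.le hM (half_pos hε) k ∅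
  exact ⟨x, unitVectorHull_mono (fun m hm => hm.1) hx,
    hxk.trans_lt (max_lt (half_lt_self hε) hk)⟩

end SmallAverages

lemma IsRegularFamily.isLowerSet {𝒜 : Set (Finset ℕ)} (h : IsRegularFamily 𝒜) : IsLowerSet 𝒜 :=
  fun s t hts hs => h.2.1 s hs t hts

lemma IsRegularFamily.wellFoundedOn {𝒜 : Set (Finset ℕ)} (h : IsRegularFamily 𝒜) :
    𝒜.WellFoundedOn (· > ·) :=
  Set.wellFoundedOn_iff_no_descending_seq.2 fun f hf =>
    h.2.2.2 ⟨f, hf, fun i => f.map_rel_iff.2 i.lt_succ_self⟩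

section UpperEstimates

variable {X : Type*} [NormedAddCommGroup X] [NormedSpace ℝ X] {F : FDDOn X} {𝒜 : Set (Finset ℕ)}
  {c C : ℝ} {z : ℕ → X} {a b : ℕ → ℕ}

lemma FDDOn.IsBlockSeq.strictMono (hz : F.IsBlockSeq z a b) : StrictMono a :=
  strictMono_nat_of_lt_succ fun n => (hz.1 n).1.trans_lt (hz.2 n)

lemma SubseqTsirelsonUpperEst.norm_linearCombination_le (hupper : SubseqTsirelsonUpperEst F 𝒜 c C)
    (hz : F.IsBlockSeq z a b) (hz1 : ∀ n, ‖z n‖ = 1) (w : ℕ →₀ ℝ) :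
    ‖Finsupp.linearCombination ℝ z w‖ ≤ C * tsirelsonNorm 𝒜 c (w.mapDomain a) := by
  obtain ⟨N, hN⟩ := w.support.exists_nat_subset_range
  rw [Finsupp.linearCombination_apply, Finsupp.mapDomain,
    Finsupp.sum_of_support_subset w hN _ (by simp), Finsupp.sum_of_support_subset w hN _ (by simp)]
  exact hupper z a b hz hz1 w N

lemma unitVectorHull_image (a : ℕ → ℕ) (K : Set ℕ) :
    unitVectorHull (a '' K) = Finsupp.mapDomain a '' unitVectorHull K := by
  have hcomm : (fun m => Finsupp.single m (1 : ℝ)) '' (a '' K) =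
      Finsupp.lmapDomain ℝ ℝ a '' ((fun n => Finsupp.single n 1) '' K) := by
    simp only [Set.image_image, Finsupp.lmapDomain_apply, Finsupp.mapDomain_single]
  rw [unitVectorHull, hcomm, ← LinearMap.image_convexHull]
  rfl

lemma le_map_linearCombination_of_mem_unitVectorHull {f : X →L[ℝ] ℝ} {δ : ℝ} {K : Set ℕ}
    (hK : ∀ n ∈ K, δ ≤ f (z n)) {w : ℕ →₀ ℝ} (hw : w ∈ unitVectorHull K) :
    δ ≤ f (Finsupp.linearCombination ℝ z w) := by
  refine convexHull_min (t := {w | δ ≤ (f ∘ₗ Finsupp.linearCombination ℝ z : _ →ₗ[ℝ] ℝ) w}) ?_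
    (convex_halfSpace_ge (LinearMap.isLinear _) δ) hw
  rintro _ ⟨n, hn, rfl⟩
  simpa using hK n hn

lemma SubseqTsirelsonUpperEst.eventually_lt (hupper : SubseqTsirelsonUpperEst F 𝒜 c C)
    (h𝒜 : IsLowerSet 𝒜) (hwf : 𝒜.WellFoundedOn (· > ·)) (hc0 : 0 ≤ c) (hc1 : c < 1)
    (hz : F.IsBlockSeq z a b) (hz1 : ∀ n, ‖z n‖ = 1) (f : X →L[ℝ] ℝ) {δ : ℝ} (hδ : 0 < δ) :
    ∀ᶠ n in atTop, f (z n) < δ := by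
  by_contra hfreq
  simp only [not_eventually, not_lt, Nat.frequently_atTop_iff_infinite] at hfreq
  have hinf := hfreq.image hz.strictMono.injective.injOn
  obtain ⟨x, hx, hxlt⟩ := exists_mem_unitVectorHull_tsirelsonNorm_lt h𝒜 hwf hc0 hc1 hinf
    (show 0 < δ / (‖f‖ * |C| + 1) by positivity)
  rw [unitVectorHull_image] at hx
  obtain ⟨w, hw, rfl⟩ := hx
  have hnonneg : 0 ≤ tsirelsonNorm 𝒜 c (w.mapDomain a) := tsirelsonNorm_nonneg _
  refine lt_irrefl δ ?_
  calc δ ≤ f (Finsupp.linearCombination ℝ z w) :=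
        le_map_linearCombination_of_mem_unitVectorHull (fun n hn => hn) hw
    _ ≤ ‖f‖ * ‖Finsupp.linearCombination ℝ z w‖ := (le_abs_self _).trans (f.le_opNorm _)
    _ ≤ ‖f‖ * (C * tsirelsonNorm 𝒜 c (w.mapDomain a)) := by
        gcongr
        exact hupper.norm_linearCombination_le hz hz1 w
    _ ≤ (‖f‖ * |C| + 1) * tsirelsonNorm 𝒜 c (w.mapDomain a) := by
        rw [← mul_assoc]
        gcongr
        exact (mul_le_mul_of_nonneg_left (le_abs_self C) (norm_nonneg f)).trans (by simp)
    _ < δ := by rwa [lt_div_iff₀' (by positivity)] at hxlt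

theorem statement_18_general (hupper : SubseqTsirelsonUpperEst F 𝒜 c C) (h𝒜 : IsLowerSet 𝒜)
    (hwf : 𝒜.WellFoundedOn (· > ·)) (hc0 : 0 ≤ c) (hc1 : c < 1) : F.Shrinking := by
  intro z a b hz hz1 f
  refine tendsto_order.2 ⟨fun l hl => ?_, fun u hu =>
    hupper.eventually_lt h𝒜 hwf hc0 hc1 hz hz1 f hu⟩
  filter_upwards [hupper.eventually_lt h𝒜 hwf hc0 hc1 hz hz1 (-f) (neg_pos.2 hl)] with n hn
  exact neg_lt_neg_iff.1 hn

end UpperEstimates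

/-- If a Banach space `X` has an FDD satisfying subsequential `T_{𝒜,c}`-upper estimates
for a regular family `𝒜` and some `0 < c < 1`, then the FDD is shrinking. -/
theorem statement_18 (X : Type*) [NormedAddCommGroup X] [NormedSpace ℝ X] [CompleteSpace X]
    (F : FDDOn X) (𝒜 : Set (Finset ℕ)) (hreg : IsRegularFamily 𝒜)
    (c : ℝ) (hc0 : 0 < c) (hc1 : c < 1)
    (C : ℝ) (hC : 1 ≤ C) (hupper : SubseqTsirelsonUpperEst F 𝒜 c C) :
    F.Shrinking :=
  statement_18_general hupper hreg.isLowerSet hreg.wellFoundedOn hc0.le hc1
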